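/- Let F be a Ferrers diagram of semiperimeter n+1, T ∈ EWtab(F), and S = S(T) its supplementary tableau. Let j ∈ rows(F) and k ∈ cols(F) with j > k. Then S_{jk} = 0 if and only if there exists k' ∈ cols(F) with k' > j such that T_{jk'} = 0 and, for every j' ∈ rows(F) with j' < k, if T_{j'k'} = 0 then T_{j'k} = 0. Otherwise S_{jk} = 1. -/

import Mathlib

open Classical

/-- A Ferrers diagram of semiperimeter `n + 1`, encoded by the set of its row labels
(labels `0, …, n` run along the south-east border; `0` labels the top row and the
last label `n` is a column label). -/
structure Ferrers (n : ℕ) where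
  rows : Finset (Fin (n + 1))
  zero_mem : 0 ∈ rows
  last_not_mem : Fin.last n ∉ rows

namespace Ferrers

/-- `(i, j)` is a cell of the diagram: `i` is a row label, `j` a column label, `i < j`. -/
def Cell {n : ℕ} (F : Ferrers n) (i j : Fin (n + 1)) : Prop :=
  i ∈ F.rows ∧ j ∉ F.rows ∧ i < j

/-- Adjacency in the Ferrers graph `G(F)`. -/
def Adj {n : ℕ} (F : Ferrers n) (u v : Fin (n + 1)) : Prop :=
  F.Cell u v ∨ F.Cell v u

/-- Degree of a vertex in `G(F)`. -/
noncomputable def deg {n : ℕ} (F : Ferrers n) (v : Fin (n + 1)) : ℕ :=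
  {u | F.Adj v u}.ncard

/-- Toppling a single vertex.  The height at the sink `0` is kept equal to `c 0`
(grains sent to the sink vanish); toppling the sink sends one grain to each of
its neighbours. -/
noncomputable def topple {n : ℕ} (F : Ferrers n) (c : Fin (n + 1) → ℕ)
    (v : Fin (n + 1)) : Fin (n + 1) → ℕ :=
  fun u =>
    if u = 0 then c 0
    else if u = v then c v - F.deg v
    else if F.Adj v u then c u + 1
    else c u

/-- Toppling the vertices of a list in order. -/
noncomputable def toppleList {n : ℕ} (F : Ferrers n) (c : Fin (n + 1) → ℕ)
    (l : List (Fin (n + 1))) : Fin (n + 1) → ℕ :=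
  l.foldl F.topple c

/-- Simultaneous toppling of a set of vertices. -/
noncomputable def toppleSet {n : ℕ} (F : Ferrers n) (c : Fin (n + 1) → ℕ)
    (S : Set (Fin (n + 1))) : Fin (n + 1) → ℕ :=
  fun u =>
    if u = 0 then c 0
    else c u + {w ∈ S | F.Adj w u}.ncard - if u ∈ S then F.deg u else 0

/-- A configuration is stable if every non-sink vertex has fewer grains than its degree. -/
def Stable {n : ℕ} (F : Ferrers n) (c : Fin (n + 1) → ℕ) : Prop :=
  ∀ v, v ≠ 0 → c v < F.deg v

/-- A Dhar (burning) ordering for `c`: an ordering `v₀ = 0, v₁, …, vₙ` of all the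
vertices such that each `vᵢ` (`i ≥ 1`) is unstable after toppling `v₀, …, v_{i-1}`. -/
def DharSeq {n : ℕ} (F : Ferrers n) (c : Fin (n + 1) → ℕ) (l : List (Fin (n + 1))) : Prop :=
  l.length = n + 1 ∧ l.Nodup ∧ l.head? = some 0 ∧
    ∀ i, ∀ h : i < l.length, 1 ≤ i →
      F.deg (l.get ⟨i, h⟩) ≤ F.toppleList c (l.take i) (l.get ⟨i, h⟩)

/-- Recurrent configurations (via Dhar's criterion).  The height at the sink is
normalised to `0`. -/
def Recurrent {n : ℕ} (F : Ferrers n) (c : Fin (n + 1) → ℕ) : Prop :=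
  c 0 = 0 ∧ F.Stable c ∧ ∃ l, F.DharSeq c l

/-- Minimal recurrent configurations: recurrent with minimal total number of grains. -/
def RecMin {n : ℕ} (F : Ferrers n) (c : Fin (n + 1) → ℕ) : Prop :=
  F.Recurrent c ∧ ∀ c', F.Recurrent c' → (∑ v, c v) ≤ ∑ v, c' v

/-- Canonical toppling: block `0` is `{0}` (the sink); from then on, blocks with odd
index are the sets of currently unstable column vertices and blocks with even index
the sets of currently unstable row vertices.  The first component is the configuration
just before toppling the block recorded in the second component. -/
noncomputable def canonAux {n : ℕ} (F : Ferrers n) (c : Fin (n + 1) → ℕ) :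
    ℕ → ((Fin (n + 1) → ℕ) × Set (Fin (n + 1)))
  | 0 => (c, {0})
  | k + 1 =>
    let c' := F.toppleSet (canonAux F c k).1 (canonAux F c k).2
    (c', {v | v ≠ 0 ∧ (if k % 2 = 0 then v ∉ F.rows else v ∈ F.rows) ∧ F.deg v ≤ c' v})

/-- The `k`-th block of the canonical toppling of `c`:
`canonTop F c 0 = U⁰ = {0}`, `canonTop F c (2i-1) = Vⁱ`, `canonTop F c (2i) = Uⁱ`. -/
noncomputable def canonTop {n : ℕ} (F : Ferrers n) (c : Fin (n + 1) → ℕ) (k : ℕ) :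
    Set (Fin (n + 1)) :=
  (F.canonAux c k).2

/-- The configuration just before toppling the `k`-th block of the canonical toppling. -/
noncomputable def canonConfig {n : ℕ} (F : Ferrers n) (c : Fin (n + 1) → ℕ) (k : ℕ) :
    Fin (n + 1) → ℕ :=
  (F.canonAux c k).1

/-- The index of the block of the canonical toppling of `c` containing `v`. -/
noncomputable def bIdx {n : ℕ} (F : Ferrers n) (c : Fin (n + 1) → ℕ) (v : Fin (n + 1)) : ℕ :=
  sInf {k | v ∈ F.canonTop c k}

/-- `T` is a EW-tableau on `F` (entries of non-cells are normalised to `false`):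
the top row contains only `1`s, every other row contains a `0`, and there is no
rectangle with two diagonally opposite `0`s and two `1`s in the other corners. -/
def IsEW {n : ℕ} (F : Ferrers n) (T : Fin (n + 1) → Fin (n + 1) → Bool) : Prop :=
  (∀ i j, ¬F.Cell i j → T i j = false) ∧
  (∀ j, F.Cell 0 j → T 0 j = true) ∧
  (∀ i, i ∈ F.rows → i ≠ 0 → ∃ j, F.Cell i j ∧ T i j = false) ∧
  (∀ i i' j j', F.Cell i j → F.Cell i j' → F.Cell i' j → F.Cell i' j' →
    T i j = T i' j' → T i j' = T i' j → T i j = T i j')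

/-- The configuration associated to a tableau: row vertices count the `1`s in their
row, column vertices count the `0`s in their column (the sink is normalised to `0`). -/
noncomputable def phiTC {n : ℕ} (F : Ferrers n) (T : Fin (n + 1) → Fin (n + 1) → Bool) :
    Fin (n + 1) → ℕ :=
  fun v =>
    if v = 0 then 0
    else if v ∈ F.rows then {j | F.Cell v j ∧ T v j = true}.ncard
    else {i | F.Cell i v ∧ T i v = false}.ncard

/-- The tableau associated to a (minimal recurrent) configuration: a cell `(i, j)`
gets a `1` exactly when `i` lies in an earlier block than `j` in the canonical
toppling of `c`. -/
noncomputable def phiCT {n : ℕ} (F : Ferrers n) (c : Fin (n + 1) → ℕ) :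
    Fin (n + 1) → Fin (n + 1) → Bool :=
  fun i j => if F.Cell i j ∧ F.bIdx c i < F.bIdx c j then true else false

/-- The supplementary tableau of `T`: `S i j = 1` exactly when the row vertex `i`
lies in an earlier block than the column vertex `j` in `CanonTop (φ_TC T)`. -/
noncomputable def suppS {n : ℕ} (F : Ferrers n) (T : Fin (n + 1) → Fin (n + 1) → Bool)
    (i j : Fin (n + 1)) : Bool :=
  if F.bIdx (F.phiTC T) i < F.bIdx (F.phiTC T) j then true else false

/-- The entry of `T` in cell `(j, k)` is a cornersupport entry. -/
def Cornersupport {n : ℕ} (F : Ferrers n) (T : Fin (n + 1) → Fin (n + 1) → Bool)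
    (j k : Fin (n + 1)) : Prop :=
  ∃ j' k', j' ∈ F.rows ∧ k' ∉ F.rows ∧ j' ≠ j ∧ k' ≠ k ∧
    F.suppS T j' k' = !(T j k) ∧ F.suppS T j' k = T j k ∧ F.suppS T j k' = T j k

/-- `ν_v(T)`: the number of non-cornersupport `0`s in row `v` (if `v` is a row label),
resp. non-cornersupport `1`s in column `v` (if `v` is a column label). -/
noncomputable def nu {n : ℕ} (F : Ferrers n) (T : Fin (n + 1) → Fin (n + 1) → Bool)
    (v : Fin (n + 1)) : ℕ :=
  if v ∈ F.rows then {k | F.Cell v k ∧ T v k = false ∧ ¬F.Cornersupport T v k}.ncard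
  else {i | F.Cell i v ∧ T i v = true ∧ ¬F.Cornersupport T i v}.ncard

/-- `μ_v(c)`: if `v ∈ Uⁱ`, the number of `k ∈ Vⁱ` with `k > v`; if `v ∈ Vⁱ`,
the number of `k ∈ U^{i-1}` with `k < v`.  In both cases the relevant block is the
one immediately preceding the block of `v`. -/
noncomputable def mu {n : ℕ} (F : Ferrers n) (c : Fin (n + 1) → ℕ) (v : Fin (n + 1)) : ℕ :=
  if v ∈ F.rows then {k | v < k ∧ k ∈ F.canonTop c (F.bIdx c v - 1)}.ncard
  else {k | k < v ∧ k ∈ F.canonTop c (F.bIdx c v - 1)}.ncard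

/-- The minimal recurrent configuration with the same canonical toppling as `c`:
if `j ∈ Uⁱ` then `minrec c j = |{ℓ ∈ Vᵏ : j < ℓ, k > i}|`, and if `j ∈ Vⁱ` then
`minrec c j = |{ℓ ∈ Uᵏ : ℓ < j, k ≥ i}|` (blocks `Vᵏ` sit at odd index `2k - 1`,
blocks `Uᵏ` at even index `2k`). -/
noncomputable def minrecFun {n : ℕ} (F : Ferrers n) (c : Fin (n + 1) → ℕ) :
    Fin (n + 1) → ℕ :=
  fun j =>
    if j = 0 then 0
    else if j ∈ F.rows then
      {l | j < l ∧ ∃ k, F.bIdx c j < 2 * k + 1 ∧ l ∈ F.canonTop c (2 * k + 1)}.ncard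
    else
      {l | l < j ∧ ∃ k, F.bIdx c j < 2 * k ∧ l ∈ F.canonTop c (2 * k)}.ncard

/-- The number of edges of `G(F)` (equivalently, the number of cells of `F`). -/
noncomputable def edgeCount {n : ℕ} (F : Ferrers n) : ℕ :=
  {p : Fin (n + 1) × Fin (n + 1) | F.Cell p.1 p.2}.ncard

end Ferrers

/-!
A `1` in a cell of `T` orients the edge of `G(F)` from its row to its column, a `0` from its column
to its row, so that `φ_TC T` is the out-degree. The rectangle condition makes this orientation
acyclic, and the conditions on the rows make `0` its only source. Any other vertex is then unstable
exactly when all its predecessors have toppled and it has not, so it topples at the step given by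
its height, the length of the longest directed path ending at it. For heights, `h u < h v` iff some
predecessor `w` of `v` has `h u ≤ h w`, and `h u ≤ h v` iff all predecessors `w` of `u` have
`h w < h v`. Unfolding `h k < h j` by the first and then the second equivalence gives the criterion,
since every row adjacent to `k` is also adjacent to any column `k' > j`.
-/

section Height

variable {α : Type*} {r : α → α → Prop} {ℓ : α → ℕ} {u v : α}

/-- A height function: `ℓ v` is the length of the longest `r`-chain ending at `v`. This is encoded
by two properties that determine `ℓ`. Canonical toppling proceeds by increasing height. -/
structure IsRelHeight (r : α → α → Prop) (ℓ : α → ℕ) : Prop where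
  lt_of_rel : ∀ {u v}, r u v → ℓ u < ℓ v
  exists_rel : ∀ {v}, ℓ v ≠ 0 → ∃ u, r u v ∧ ℓ v = ℓ u + 1

theorem exists_isRelHeight_of_wellFounded [Finite α] (hr : WellFounded r) :
    ∃ ℓ, IsRelHeight r ℓ := by
  have := Fintype.ofFinite α
  let step (v : α) (ih : ∀ u, r u v → ℕ) : ℕ :=
    Finset.univ.sup fun u => if h : r u v then ih u h + 1 else 0
  let ℓ := hr.fix step
  have ℓ_eq (v : α) : ℓ v = Finset.univ.sup fun u => if r u v then ℓ u + 1 else 0 :=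
    hr.fix_eq step v
  refine ⟨ℓ, fun {u v} huv => ?_, fun {v} hv => ?_⟩
  · have hle := Finset.le_sup (f := fun u => if r u v then ℓ u + 1 else 0) (Finset.mem_univ u)
    rwa [← ℓ_eq, if_pos huv] at hle
  · obtain ⟨u, -, hu⟩ := Finset.exists_mem_eq_sup Finset.univ ⟨v, Finset.mem_univ v⟩
      fun u => if r u v then ℓ u + 1 else 0
    rw [← ℓ_eq] at hu
    split_ifs at hu with huv
    · exact ⟨u, huv, hu⟩
    · exact absurd hu hv

namespace IsRelHeight

theorem eq_zero_iff (hℓ : IsRelHeight r ℓ) : ℓ v = 0 ↔ ∀ u, ¬r u v := by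
  refine ⟨fun hv u huv => ?_, fun hv => ?_⟩
  · exact Nat.not_lt_zero _ (hv ▸ hℓ.lt_of_rel huv)
  · by_contra hne
    obtain ⟨u, huv, -⟩ := hℓ.exists_rel hne
    exact hv u huv

theorem lt_iff (hℓ : IsRelHeight r ℓ) : ℓ u < ℓ v ↔ ∃ w, r w v ∧ ℓ u ≤ ℓ w := by
  constructor
  · intro huv
    obtain ⟨w, hwv, hw⟩ := hℓ.exists_rel (Nat.ne_zero_of_lt huv)
    exact ⟨w, hwv, by omega⟩
  · rintro ⟨w, hwv, huw⟩
    exact huw.trans_lt (hℓ.lt_of_rel hwv)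

theorem le_iff (hℓ : IsRelHeight r ℓ) : ℓ u ≤ ℓ v ↔ ∀ w, r w u → ℓ w < ℓ v := by
  rw [← not_lt, hℓ.lt_iff]
  simp only [not_exists, not_and, not_le]

theorem even_iff (hℓ : IsRelHeight r ℓ) {p : α → Prop} (hp : ∀ {u v}, r u v → (p u ↔ ¬p v))
    (hp₀ : ∀ v, ℓ v = 0 → p v) (v : α) : Even (ℓ v) ↔ p v := by
  induction hm : ℓ v generalizing v with
  | zero => simp only [Even.zero, hp₀ v hm]
  | succ m ih =>
    obtain ⟨u, huv, hu⟩ := hℓ.exists_rel (by omega : ℓ v ≠ 0)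
    rw [Nat.even_add_one, ih u (by omega), hp huv, not_not]

end IsRelHeight

end Height

namespace Ferrers

variable {n : ℕ} {F : Ferrers n} {T : Fin (n + 1) → Fin (n + 1) → Bool}
  {u v : Fin (n + 1)}

theorem adj_comm : F.Adj u v ↔ F.Adj v u := or_comm

theorem toppleSet_empty (c : Fin (n + 1) → ℕ) : F.toppleSet c ∅ = c := by
  ext v
  by_cases hv : v = 0 <;> simp [toppleSet, hv]

/-- The subtraction in `toppleSet` is truncated: a vertex holding fewer than `F.deg v` grains would
lose only what it has. -/
theorem toppleSet_toppleSet {c : Fin (n + 1) → ℕ} {A B : Set (Fin (n + 1))} (hAB : Disjoint A B)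
    (hA : ∀ v ∈ A, v ≠ 0 → F.deg v ≤ c v + {w ∈ A | F.Adj w v}.ncard) :
    F.toppleSet (F.toppleSet c A) B = F.toppleSet c (A ∪ B) := by
  ext v
  by_cases hv : v = 0
  · simp only [toppleSet, hv, if_true]
  have hcard : {w ∈ A ∪ B | F.Adj w v}.ncard =
      {w ∈ A | F.Adj w v}.ncard + {w ∈ B | F.Adj w v}.ncard := by
    rw [← Set.ncard_union_eq (hAB.mono (Set.sep_subset _ _) (Set.sep_subset _ _))]
    exact congrArg Set.ncard (Set.ext fun _ => or_and_right)
  simp only [toppleSet, hv, if_false]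
  rw [hcard]
  simp only [Set.mem_union]
  by_cases hvA : v ∈ A
  · have hvB : v ∉ B := Set.disjoint_left.1 hAB hvA
    have := hA v hvA hv
    simp only [hvA, hvB, or_false, if_true, if_false]
    omega
  · simp only [hvA, false_or, if_false]
    omega

/-- The orientation of `G(F)` encoded by a tableau: a `1` in a cell orients the edge from its row
to its column, a `0` from its column to its row. -/
def Arc (F : Ferrers n) (T : Fin (n + 1) → Fin (n + 1) → Bool) (u v : Fin (n + 1)) : Prop :=
  (F.Cell u v ∧ T u v = true) ∨ (F.Cell v u ∧ T v u = false)

theorem adj_iff_arc_or_arc : F.Adj u v ↔ F.Arc T u v ∨ F.Arc T v u := by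
  unfold Adj Arc
  cases T u v <;> cases T v u <;> simp [or_comm]

theorem arc_iff_of_mem_rows (hv : v ∈ F.rows) :
    F.Arc T u v ↔ u ∉ F.rows ∧ v < u ∧ T v u = false := by
  simp only [Arc, Cell, hv, not_true_eq_false, false_and, and_false, false_or, true_and, and_assoc]

theorem arc_iff_of_notMem_rows (hv : v ∉ F.rows) :
    F.Arc T u v ↔ u ∈ F.rows ∧ u < v ∧ T u v = true := by
  simp only [Arc, Cell, hv, not_false_eq_true, true_and, false_and, or_false, and_assoc]

namespace Arc

theorem mem_rows_iff (h : F.Arc T u v) : u ∈ F.rows ↔ v ∉ F.rows := by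
  unfold Arc Cell at h
  tauto

theorem asymm (h : F.Arc T u v) : ¬F.Arc T v u := by
  unfold Arc Cell at *
  grind

theorem ne (h : F.Arc T u v) : u ≠ v := by
  rintro rfl
  exact h.asymm h

end Arc

theorem phiTC_eq_ncard_arc (hv : v ≠ 0) : F.phiTC T v = {u | F.Arc T v u}.ncard := by
  unfold phiTC
  rw [if_neg hv]
  split_ifs with h <;>
  · congr 1
    ext u
    simp only [Set.mem_ofPred_eq, Arc, Cell]
    tauto

theorem deg_eq_ncard_arc_add_phiTC (hv : v ≠ 0) :
    F.deg v = {u | F.Arc T u v}.ncard + F.phiTC T v := by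
  have hdisj : Disjoint {u | F.Arc T u v} {u | F.Arc T v u} :=
    Set.disjoint_left.2 fun _ hu => Arc.asymm hu
  rw [phiTC_eq_ncard_arc hv, ← Set.ncard_union_eq hdisj]
  unfold deg
  congr 1
  ext u
  exact adj_comm.trans adj_iff_arc_or_arc

section Burning

variable {A : Set (Fin (n + 1))}

theorem deg_le_phiTC_add_ncard (hv : v ≠ 0) (hA : ∀ u, F.Arc T u v → u ∈ A) :
    F.deg v ≤ F.phiTC T v + {w ∈ A | F.Adj w v}.ncard := by
  have hsub : {u | F.Arc T u v} ⊆ {w ∈ A | F.Adj w v} :=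
    fun u hu => ⟨hA u hu, adj_iff_arc_or_arc.2 (Or.inl hu)⟩
  have := Set.ncard_le_ncard hsub
  rw [deg_eq_ncard_arc_add_phiTC (T := T) hv]
  omega

theorem toppleSet_phiTC_lt_deg (hv : v ≠ 0) (hvA : v ∈ A) (hpred : ∃ u, F.Arc T u v) :
    F.toppleSet (F.phiTC T) A v < F.deg v := by
  have hle : {w ∈ A | F.Adj w v}.ncard ≤ F.deg v :=
    Set.ncard_le_ncard fun w hw => adj_comm.1 hw.2
  have hpos : 0 < {u | F.Arc T u v}.ncard := (Set.ncard_pos).2 hpred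
  have hdeg := deg_eq_ncard_arc_add_phiTC (F := F) (T := T) hv
  simp only [toppleSet, hv, hvA, if_true, if_false]
  omega

theorem deg_le_toppleSet_phiTC_iff (hv : v ≠ 0) (hpred : ∃ u, F.Arc T u v)
    (hA : ∀ u, F.Arc T v u → u ∈ A → v ∈ A) :
    F.deg v ≤ F.toppleSet (F.phiTC T) A v ↔ v ∉ A ∧ ∀ u, F.Arc T u v → u ∈ A := by
  by_cases hvA : v ∈ A
  · simp only [hvA, not_true_eq_false, false_and, iff_false, not_le]
    exact toppleSet_phiTC_lt_deg hv hvA hpred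
  simp only [toppleSet, hv, hvA, if_false, Nat.sub_zero, not_false_eq_true, true_and]
  refine ⟨fun hle u hu => ?_, deg_le_phiTC_add_ncard hv⟩
  have hsub : {w ∈ A | F.Adj w v} ⊆ {u | F.Arc T u v} := fun w hw =>
    (adj_iff_arc_or_arc.1 hw.2).resolve_right fun hvw => hvA (hA w hvw hw.1)
  have hcard : {u | F.Arc T u v}.ncard ≤ {w ∈ A | F.Adj w v}.ncard := by
    rw [deg_eq_ncard_arc_add_phiTC (T := T) hv] at hle
    omega
  exact (Set.eq_of_subset_of_ncard_le hsub hcard ▸ hu : u ∈ {w ∈ A | F.Adj w v}).1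

end Burning

section CanonicalToppling

variable {ℓ : Fin (n + 1) → ℕ}

theorem mem_canonTop_succ {c : Fin (n + 1) → ℕ} {k : ℕ} :
    v ∈ F.canonTop c (k + 1) ↔
      v ≠ 0 ∧ (Even (k + 1) ↔ v ∈ F.rows) ∧ F.deg v ≤ F.canonConfig c (k + 1) v := by
  change (v ≠ 0 ∧ (if k % 2 = 0 then v ∉ F.rows else v ∈ F.rows) ∧ _) ↔ _
  rw [Nat.even_add_one, Nat.even_iff]
  refine and_congr_right fun _ => and_congr_left fun _ => ?_
  split_ifs <;> tauto

theorem even_height_iff_mem_rows (hℓ : IsRelHeight (F.Arc T) ℓ) (hℓ₀ : ∀ v, ℓ v = 0 ↔ v = 0)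
    (v : Fin (n + 1)) : Even (ℓ v) ↔ v ∈ F.rows :=
  hℓ.even_iff Arc.mem_rows_iff (fun v hv => (hℓ₀ v).1 hv ▸ F.zero_mem) v

theorem deg_le_toppleSet_height_lt_iff (hℓ : IsRelHeight (F.Arc T) ℓ)
    (hℓ₀ : ∀ v, ℓ v = 0 ↔ v = 0) (hv : v ≠ 0) (k : ℕ) :
    F.deg v ≤ F.toppleSet (F.phiTC T) {w | ℓ w < k} v ↔ ℓ v = k := by
  obtain ⟨u, huv, hu⟩ := hℓ.exists_rel (mt (hℓ₀ v).1 hv)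
  have hclosed : ∀ w, F.Arc T v w → w ∈ {w | ℓ w < k} → v ∈ {w | ℓ w < k} :=
    fun w hvw hw => (hℓ.lt_of_rel hvw).trans hw
  rw [deg_le_toppleSet_phiTC_iff hv ⟨u, huv⟩ hclosed]
  simp only [Set.mem_ofPred_eq, not_lt]
  constructor
  · rintro ⟨hkv, hpred⟩
    have := hpred u huv
    omega
  · rintro rfl
    exact ⟨le_rfl, fun _ => hℓ.lt_of_rel⟩

theorem canonAux_phiTC_eq (hℓ : IsRelHeight (F.Arc T) ℓ) (hℓ₀ : ∀ v, ℓ v = 0 ↔ v = 0) (k : ℕ) :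
    F.canonAux (F.phiTC T) k = (F.toppleSet (F.phiTC T) {v | ℓ v < k}, {v | ℓ v = k}) := by
  induction k with
  | zero => simp [canonAux, toppleSet_empty, hℓ₀]
  | succ k ih =>
    have hconfig : F.canonConfig (F.phiTC T) (k + 1) =
        F.toppleSet (F.phiTC T) {v | ℓ v < k + 1} := by
      have hdisj : Disjoint {v | ℓ v < k} {v | ℓ v = k} :=
        Set.disjoint_left.2 fun v hlt heq => hlt.ne heq
      have hunion : {v | ℓ v < k} ∪ {v | ℓ v = k} = {v | ℓ v < k + 1} := by
        ext v
        exact Nat.lt_succ_iff_lt_or_eq.symm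
      change F.toppleSet (F.canonAux _ k).1 (F.canonAux _ k).2 = _
      rw [ih, toppleSet_toppleSet hdisj, hunion]
      exact fun v hvk hv => deg_le_phiTC_add_ncard hv fun u hu => (hℓ.lt_of_rel hu).trans hvk
    refine Prod.ext hconfig (Set.ext fun v => ?_)
    change v ∈ F.canonTop _ (k + 1) ↔ ℓ v = k + 1
    rw [mem_canonTop_succ, hconfig]
    constructor
    · rintro ⟨hv, -, hdeg⟩
      exact (deg_le_toppleSet_height_lt_iff hℓ hℓ₀ hv _).1 hdeg
    · intro hvk
      have hv : v ≠ 0 := mt (hℓ₀ v).2 (hvk ▸ k.succ_ne_zero)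
      exact ⟨hv, hvk ▸ even_height_iff_mem_rows hℓ hℓ₀ v,
        (deg_le_toppleSet_height_lt_iff hℓ hℓ₀ hv _).2 hvk⟩

theorem bIdx_phiTC_eq (hℓ : IsRelHeight (F.Arc T) ℓ) (hℓ₀ : ∀ v, ℓ v = 0 ↔ v = 0) :
    F.bIdx (F.phiTC T) = ℓ := by
  ext v
  simp only [bIdx, canonTop, canonAux_phiTC_eq hℓ hℓ₀, Set.mem_ofPred_eq]
  rw [Set.ofPred_eq_eq_singleton', csInf_singleton]

end CanonicalToppling

namespace IsEW

theorem not_arc_zero (hT : F.IsEW T) : ¬F.Arc T u 0 := by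
  rw [arc_iff_of_mem_rows F.zero_mem]
  rintro ⟨hu, hlt, hfalse⟩
  simp [hT.2.1 u ⟨F.zero_mem, hu, hlt⟩] at hfalse

theorem exists_arc (hT : F.IsEW T) (hv : v ≠ 0) : ∃ u, F.Arc T u v := by
  by_cases hrow : v ∈ F.rows
  · obtain ⟨u, hu⟩ := hT.2.2.1 v hrow hv
    exact ⟨u, Or.inr hu⟩
  · have hcell : F.Cell 0 v := ⟨F.zero_mem, hrow, Fin.pos_of_ne_zero hv⟩
    exact ⟨0, Or.inl ⟨hcell, hT.2.1 v hcell⟩⟩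

theorem not_arc_of_arc_of_arc_of_arc (hT : F.IsEW T) {a b c d : Fin (n + 1)}
    (hab : F.Arc T a b) (hbc : F.Arc T b c) (hcd : F.Arc T c d) : ¬F.Arc T d a := by
  have hrow := hT.2.2.2 a c b d
  have hcol := hT.2.2.2 b d a c
  unfold Arc Cell at *
  grind

theorem exists_source_mem (hT : F.IsEW T) {X : Finset (Fin (n + 1))} (hX : X.Nonempty) :
    ∃ s ∈ X, ∀ u ∈ X, ¬F.Arc T u s := by
  induction X using Finset.strongInduction with
  | H X ih =>
  obtain hC | hC := (X.filter (· ∉ F.rows)).eq_empty_or_nonempty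
  · have hrows : ∀ u ∈ X, u ∈ F.rows := by simpa [Finset.filter_eq_empty_iff] using hC
    obtain ⟨s, hs⟩ := hX
    exact ⟨s, hs, fun u hu hus => hus.mem_rows_iff.1 (hrows u hu) (hrows s hs)⟩
  -- The rows adjacent to the smallest column `k` of `X` are adjacent to all columns of `X`.
  obtain ⟨k, hk, hmin⟩ := Finset.exists_min_image _ id hC
  simp only [Finset.mem_filter, id, and_imp] at hk hmin
  obtain ⟨hkX, hkcol⟩ := hk
  by_cases hksource : ∀ u ∈ X, ¬F.Arc T u k
  · exact ⟨k, hkX, hksource⟩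
  push Not at hksource
  obtain ⟨i, hiX, hik⟩ := hksource
  obtain ⟨s, hs, hsource⟩ := ih (X.erase k) (Finset.erase_ssubset hkX)
    ⟨i, Finset.mem_erase.2 ⟨hik.ne, hiX⟩⟩
  have hsX : s ∈ X := Finset.mem_of_mem_erase hs
  have eq_of_arc {u} (hu : u ∈ X) (hus : F.Arc T u s) : u = k := by
    by_contra huk
    exact hsource u (Finset.mem_erase.2 ⟨huk, hu⟩) hus
  by_cases hks : F.Arc T k s
  · refine ⟨i, hiX, fun u hu hui => ?_⟩
    have hucol : u ∉ F.rows := fun h => hui.mem_rows_iff.1 h (hik.mem_rows_iff.2 hkcol)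
    have huk : u ≠ k := fun h => hik.asymm (h ▸ hui)
    have hsrow : s ∈ F.rows := by_contra fun h => hkcol (hks.mem_rows_iff.2 h)
    have hsk : s < k := ((arc_iff_of_mem_rows hsrow).1 hks).2.1
    have hadj : F.Adj s u := Or.inl ⟨hsrow, hucol, hsk.trans_le (hmin u hu hucol)⟩
    have hsu : F.Arc T s u := (adj_iff_arc_or_arc.1 hadj).resolve_right fun h =>
      huk (eq_of_arc hu h)
    exact hT.not_arc_of_arc_of_arc_of_arc hsu hui hik hks
  · exact ⟨s, hsX, fun u hu hus => hks (eq_of_arc hu hus ▸ hus)⟩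

theorem wellFounded_arc (hT : F.IsEW T) : WellFounded (F.Arc T) := by
  rw [WellFounded.wellFounded_iff_has_min]
  intro X hX
  simpa using hT.exists_source_mem (Set.toFinset_nonempty.2 hX)

theorem height_eq_zero_iff (hT : F.IsEW T) {ℓ : Fin (n + 1) → ℕ}
    (hℓ : IsRelHeight (F.Arc T) ℓ) (v : Fin (n + 1)) : ℓ v = 0 ↔ v = 0 := by
  rw [hℓ.eq_zero_iff]
  refine ⟨fun hv => ?_, fun hv u => hv ▸ hT.not_arc_zero⟩
  by_contra hne
  obtain ⟨u, huv⟩ := hT.exists_arc hne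
  exact hv u huv

theorem isRelHeight_bIdx (hT : F.IsEW T) : IsRelHeight (F.Arc T) (F.bIdx (F.phiTC T)) := by
  obtain ⟨ℓ, hℓ⟩ := exists_isRelHeight_of_wellFounded hT.wellFounded_arc
  rwa [bIdx_phiTC_eq hℓ (hT.height_eq_zero_iff hℓ)]

theorem suppS_eq_false_iff_bIdx_lt (hT : F.IsEW T) {j k : Fin (n + 1)} (hj : j ∈ F.rows)
    (hk : k ∉ F.rows) :
    F.suppS T j k = false ↔ F.bIdx (F.phiTC T) k < F.bIdx (F.phiTC T) j := by
  have hℓ := hT.isRelHeight_bIdx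
  have heven := even_height_iff_mem_rows hℓ (hT.height_eq_zero_iff hℓ)
  have hne : F.bIdx (F.phiTC T) k ≠ F.bIdx (F.phiTC T) j := fun h =>
    hk ((heven k).1 (h ▸ (heven j).2 hj))
  simp only [suppS, Bool.if_false_right, Bool.and_true, decide_eq_false_iff_not, not_lt]
  exact hne.le_iff_lt

theorem bIdx_lt_bIdx_iff_of_cell (hT : F.IsEW T) {i k : Fin (n + 1)} (hcell : F.Cell i k) :
    F.bIdx (F.phiTC T) i < F.bIdx (F.phiTC T) k ↔ T i k = true := by
  have hℓ := hT.isRelHeight_bIdx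
  refine ⟨fun hlt => ?_, fun h => hℓ.lt_of_rel (Or.inl ⟨hcell, h⟩)⟩
  by_contra h
  exact hlt.asymm (hℓ.lt_of_rel (Or.inr ⟨hcell, Bool.eq_false_of_not_eq_true h⟩))

end IsEW

end Ferrers

/-- **Proposition.** Let `j` be a row and `k` a column with `k < j`
(so `(j, k)` is not a cell of `F`).  Then `S_{jk} = 0` if and only if there is a
column `k' > j` with `T_{jk'} = 0` such that every row `j' < k` with `T_{j'k'} = 0`
also has `T_{j'k} = 0`; otherwise `S_{jk} = 1`. -/
theorem suppS_eq_zero_iff {n : ℕ} (F : Ferrers n)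
    (T : Fin (n + 1) → Fin (n + 1) → Bool) (hT : F.IsEW T)
    (j k : Fin (n + 1)) (hj : j ∈ F.rows) (hk : k ∉ F.rows) (hkj : k < j) :
    F.suppS T j k = false ↔
      ∃ k' : Fin (n + 1), k' ∉ F.rows ∧ j < k' ∧ T j k' = false ∧
        ∀ j' : Fin (n + 1), j' ∈ F.rows → j' < k → T j' k' = false → T j' k = false := by
  have hℓ := hT.isRelHeight_bIdx
  rw [hT.suppS_eq_false_iff_bIdx_lt hj hk, hℓ.lt_iff]
  refine exists_congr fun k' => ?_
  rw [Ferrers.arc_iff_of_mem_rows hj, and_assoc, and_assoc]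
  refine and_congr_right fun hk' => and_congr_right fun hjk' => and_congr_right fun _ => ?_
  rw [hℓ.le_iff]
  refine forall_congr' fun j' => ?_
  rw [Ferrers.arc_iff_of_notMem_rows hk, and_imp, and_imp]
  refine imp_congr_right fun hj' => imp_congr_right fun hj'k => ?_
  rw [hT.bIdx_lt_bIdx_iff_of_cell ⟨hj', hk', hj'k.trans (hkj.trans hjk')⟩]
  cases T j' k <;> cases T j' k' <;> decide
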